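/- Let μ₁, μ₂ > 0 and 0 ≤ μ₃ < min(μ₁, μ₂). Then for all k, ℓ ∈ ℕ the double series ∑_{x=0}^∞ ∑_{y=0}^∞ p(x, y; μ₁, μ₂, μ₃) P_k(x; μ₁) P_ℓ(y; μ₂) converges absolutely and equals k! μ₃^k if k = ℓ and 0 if k ≠ ℓ, with the convention 0^0 = 1. -/

import Mathlib

/-!
Write `μ₁ = a + c`, `μ₂ = b + c`, `μ₃ = c`. Unfolding the bivariate Poisson weights turns the double
series into the triple series over `(j, u, v)` of
`p(j; c) p(u; a) p(v; b) P_k(u + j; a + c) P_ℓ(v + j; b + c)`.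
It converges absolutely because `P_k(x; μ)` is `O(2^x)`, which the factorials in the Poisson weights
absorb. Summing over `u` and `v` first gives `P_k(j; c) P_ℓ(j; c)` (`hasSum_charlier_shift`), and the
sum over `j` is then the classical orthogonality relation (`hasSum_charlier_mul`).

Both of these are inductions on the degree, powered by the recurrence
`P_{k+1}(x) = x P_k(x - 1) - μ P_k(x)` (`charlier_succ`) and the Chen–Stein identity
`∑ p(x; μ) x g(x - 1) = μ ∑ p(x; μ) g(x)` (`hasSum_poissonPMF_stein`). They are run on `HasSum`, so
convergence is carried along with the value.
-/

open scoped BigOperators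
open MeasureTheory Filter Topology

/-- Charlier polynomial `P_k(x; μ)`. -/
noncomputable def charlier (μ : ℝ) (k x : ℕ) : ℝ :=
  ∑ j ∈ Finset.range (k + 1),
    (k.choose j : ℝ) * (-μ) ^ (k - j) * (x.descFactorial j : ℝ)

/-- Poisson probability mass function `p(x; μ)`. -/
noncomputable def poissonPMF (μ : ℝ) (x : ℕ) : ℝ :=
  Real.exp (-μ) * μ ^ x / (x.factorial : ℝ)

/-- Backward difference operator `D₋`. -/
def Dminus (g : ℕ → ℝ) : ℕ → ℝ :=
  fun x => g x - if x = 0 then 0 else g (x - 1)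

/-- Forward difference operator `D₊`. -/
def Dplus (g : ℕ → ℝ) : ℕ → ℝ :=
  fun x => g (x + 1) - g x

/-- Bivariate Poisson probability mass function `p(x, y; μ₁, μ₂, μ₃)`. -/
noncomputable def poissonPMF₂ (μ₁ μ₂ μ₃ : ℝ) (x y : ℕ) : ℝ :=
  ∑ j ∈ Finset.range (min x y + 1),
    poissonPMF (μ₁ - μ₃) (x - j) * poissonPMF (μ₂ - μ₃) (y - j) * poissonPMF μ₃ j

/-- Charlier coefficient `c_G(k; μ)`. -/
noncomputable def charlierCoeff (μ : ℝ) (G : ℕ → ℝ) (k : ℕ) : ℝ :=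
  (μ ^ k)⁻¹ * ∑' x : ℕ, poissonPMF μ x * G x * charlier μ k x

lemma charlier_eq_antidiagonal (μ : ℝ) (k x : ℕ) :
    charlier μ k x = ∑ q ∈ Finset.HasAntidiagonal.antidiagonal k,
      (k.choose q.1 : ℝ) * ((-μ) ^ q.2 * (x.descFactorial q.1 : ℝ)) := by
  rw [Finset.Nat.sum_antidiagonal_eq_sum_range_succ_mk]
  simp only [charlier, mul_assoc]

lemma charlier_zero (μ : ℝ) (x : ℕ) : charlier μ 0 x = 1 := by
  simp [charlier]

/-- The truncated `x - 1` at `x = 0` is harmless, being multiplied by `x`. -/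
lemma charlier_succ (μ : ℝ) (k x : ℕ) :
    charlier μ (k + 1) x = x * charlier μ k (x - 1) - μ * charlier μ k x := by
  have hd : ∀ j, (x.descFactorial (j + 1) : ℝ) = x * ((x - 1).descFactorial j : ℝ) := by
    intro j
    cases x with
    | zero => simp
    | succ x => rw [Nat.succ_descFactorial_succ, Nat.add_sub_cancel, Nat.cast_mul]
  rw [charlier_eq_antidiagonal, charlier_eq_antidiagonal, charlier_eq_antidiagonal,
    Finset.sum_antidiagonal_choose_succ_mul
      (fun i j => (-μ) ^ j * (x.descFactorial i : ℝ)), Finset.mul_sum, Finset.mul_sum,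
    ← Finset.sum_add_distrib, ← Finset.sum_sub_distrib]
  refine Finset.sum_congr rfl fun q hq => ?_
  have hc : k.choose q.2 = k.choose q.1 :=
    (Nat.choose_symm_of_eq_add (Finset.HasAntidiagonal.mem_antidiagonal.1 hq).symm).symm
  rw [hd, hc]
  ring

/-- Forward differences lower the degree: `P_k(x + 1) - P_k(x) = k P_{k-1}(x)`. -/
lemma charlier_add_one (μ : ℝ) (k x : ℕ) :
    charlier μ k (x + 1) = charlier μ k x + k * charlier μ (k - 1) x := by
  induction k generalizing x with
  | zero => simp [charlier_zero]
  | succ k ih =>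
    have hk : (k : ℝ) * charlier μ k x
        = k * (x * charlier μ (k - 1) (x - 1) - μ * charlier μ (k - 1) x) := by
      cases k with
      | zero => simp
      | succ k => rw [charlier_succ μ k x]; simp
    have hx : (x : ℝ) * charlier μ k x
        = x * (charlier μ k (x - 1) + k * charlier μ (k - 1) (x - 1)) := by
      cases x with
      | zero => simp
      | succ x => rw [ih x]; simp
    rw [charlier_succ μ k (x + 1), charlier_succ μ k x, ih x]
    push_cast [Nat.add_sub_cancel]
    linear_combination hx - hk

lemma exists_abs_charlier_le (μ : ℝ) (k : ℕ) :
    ∃ C : ℝ, 0 ≤ C ∧ ∀ x, |charlier μ k x| ≤ C * 2 ^ x := by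
  refine ⟨∑ j ∈ Finset.range (k + 1), (k.choose j : ℝ) * |μ| ^ (k - j) * (j.factorial : ℝ),
    by positivity, fun x => ?_⟩
  rw [Finset.sum_mul]
  refine (Finset.abs_sum_le_sum_abs _ _).trans (Finset.sum_le_sum fun j _ => ?_)
  rw [abs_mul, abs_mul, abs_pow, abs_neg, Nat.abs_cast, Nat.abs_cast, mul_assoc _ _ ((2 : ℝ) ^ x)]
  refine mul_le_mul_of_nonneg_left ?_ (by positivity)
  rw [Nat.descFactorial_eq_factorial_mul_choose]
  have : x.choose j ≤ 2 ^ x := Nat.choose_le_two_pow x j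
  exact_mod_cast Nat.mul_le_mul_left _ this

lemma poissonPMF_nonneg {μ : ℝ} (h : 0 ≤ μ) (x : ℕ) : 0 ≤ poissonPMF μ x := by
  unfold poissonPMF; positivity

lemma summable_poissonPMF_mul_pow (μ r : ℝ) : Summable fun x => poissonPMF μ x * r ^ x := by
  refine ((Real.summable_pow_div_factorial (μ * r)).mul_left (Real.exp (-μ))).congr fun x => ?_
  simp only [poissonPMF, mul_pow]
  ring

lemma hasSum_poissonPMF (μ : ℝ) : HasSum (poissonPMF μ) 1 := by
  have h := (NormedSpace.expSeries_div_hasSum_exp μ).mul_left (Real.exp (-μ))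
  rw [← Real.exp_eq_exp_ℝ, ← Real.exp_add, neg_add_cancel, Real.exp_zero] at h
  refine h.congr_fun fun x => ?_
  simp only [poissonPMF]
  ring

/-- The Chen–Stein identity for the Poisson distribution. -/
lemma hasSum_poissonPMF_stein {μ s : ℝ} {g : ℕ → ℝ}
    (h : HasSum (fun x => poissonPMF μ x * g x) s) :
    HasSum (fun x : ℕ => poissonPMF μ x * (x * g (x - 1))) (μ * s) := by
  rw [← hasSum_nat_add_iff' 1]
  simp only [Finset.sum_range_one, Nat.cast_zero, zero_mul, mul_zero, sub_zero]
  refine (h.mul_left μ).congr_fun fun x => ?_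
  have : (x.factorial : ℝ) ≠ 0 := by positivity
  have : ((x : ℝ) + 1) ≠ 0 := by positivity
  simp only [poissonPMF, Nat.factorial_succ, Nat.add_sub_cancel]
  push_cast
  field_simp
  ring

/-- Averaging a shifted Charlier polynomial against a Poisson law of mean `a` lowers its
parameter by `a`. -/
lemma hasSum_charlier_shift (a c : ℝ) (k j : ℕ) :
    HasSum (fun u => poissonPMF a u * charlier (a + c) k (u + j)) (charlier c k j) := by
  induction k generalizing j with
  | zero => simpa [charlier_zero] using hasSum_poissonPMF a
  | succ k ih =>
    have h := ((hasSum_poissonPMF_stein (ih j)).add ((ih (j - 1)).mul_left (j : ℝ))).sub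
      ((ih j).mul_left (a + c))
    rw [show charlier c (k + 1) j = a * charlier c k j + j * charlier c k (j - 1)
      - (a + c) * charlier c k j by rw [charlier_succ]; ring]
    refine h.congr_fun fun u => ?_
    -- Splitting the factor `u + j` of the recurrence; each truncated subtraction is
    -- multiplied by a factor vanishing where it truncates.
    have h₁ : (u : ℝ) * charlier (a + c) k (u + j - 1)
        = u * charlier (a + c) k (u - 1 + j) := by
      cases u with
      | zero => simp
      | succ u => congr 2; omega
    have h₂ : (j : ℝ) * charlier (a + c) k (u + j - 1)
        = j * charlier (a + c) k (u + (j - 1)) := by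
      cases j with
      | zero => simp
      | succ j => rfl
    rw [charlier_succ]
    push_cast
    linear_combination poissonPMF a u * (h₁ + h₂)

/-- Orthogonality of the Charlier polynomials with respect to the Poisson weights. -/
lemma hasSum_charlier_mul (c : ℝ) (k ℓ : ℕ) :
    HasSum (fun j => poissonPMF c j * (charlier c k j * charlier c ℓ j))
      (if k = ℓ then (k.factorial : ℝ) * c ^ k else 0) := by
  induction k generalizing ℓ with
  | zero =>
    -- The case of degree `0` is averaging down to the parameter `0`, where `P_ℓ(0; 0) = 0 ^ ℓ`.
    have h := hasSum_charlier_shift c 0 ℓ 0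
    simp only [add_zero] at h
    convert h using 1
    · simp [charlier_zero]
    · cases ℓ with
      | zero => simp [charlier_zero]
      | succ ℓ => simp [charlier_succ]
  | succ k ih =>
    -- The Chen–Stein identity moves the factor `j P_k(j - 1)` of the recurrence to a forward
    -- difference of `P_ℓ`.
    have h₁ : HasSum (fun j => poissonPMF c j * (charlier c k j * charlier c ℓ (j + 1)))
        ((if k = ℓ then (k.factorial : ℝ) * c ^ k else 0)
          + ℓ * (if k = ℓ - 1 then (k.factorial : ℝ) * c ^ k else 0)) := by
      refine ((ih ℓ).add ((ih (ℓ - 1)).mul_left (ℓ : ℝ))).congr_fun fun j => ?_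
      rw [charlier_add_one]
      ring
    have h := (hasSum_poissonPMF_stein h₁).sub ((ih ℓ).mul_left c)
    have hv : (if k + 1 = ℓ then ((k + 1).factorial : ℝ) * c ^ (k + 1) else 0)
        = c * ((if k = ℓ then (k.factorial : ℝ) * c ^ k else 0)
          + ℓ * (if k = ℓ - 1 then (k.factorial : ℝ) * c ^ k else 0))
          - c * (if k = ℓ then (k.factorial : ℝ) * c ^ k else 0) := by
      rw [mul_add, add_sub_cancel_left]
      cases ℓ with
      | zero => simp
      | succ ℓ =>
        by_cases hkl : k = ℓ
        · subst hkl
          simp [Nat.factorial_succ]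
          ring
        · simp [hkl]
    rw [hv]
    refine h.congr_fun fun j => ?_
    have hj : (j : ℝ) * charlier c ℓ (j - 1 + 1) = j * charlier c ℓ j := by
      cases j <;> simp
    rw [charlier_succ]
    linear_combination -poissonPMF c j * charlier c k (j - 1) * hj

/-- The bivariate Poisson series, rearranged as a series over the independent components
`(j, u, v)` with `x = u + j` and `y = v + j`. -/
lemma hasSum_triple {a b c : ℝ} (ha : 0 ≤ a) (hb : 0 ≤ b) (hc : 0 ≤ c) (k ℓ : ℕ) :
    HasSum (fun t : ℕ × ℕ × ℕ => poissonPMF c t.1 *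
        ((poissonPMF a t.2.1 * charlier (a + c) k (t.2.1 + t.1)) *
          (poissonPMF b t.2.2 * charlier (b + c) ℓ (t.2.2 + t.1))))
      (if k = ℓ then (k.factorial : ℝ) * c ^ k else 0) := by
  set F : ℕ × ℕ × ℕ → ℝ := fun t => poissonPMF c t.1 *
        ((poissonPMF a t.2.1 * charlier (a + c) k (t.2.1 + t.1)) *
          (poissonPMF b t.2.2 * charlier (b + c) ℓ (t.2.2 + t.1))) with hF
  obtain ⟨C, hC, hCk⟩ := exists_abs_charlier_le (a + c) k
  obtain ⟨D, hD, hDl⟩ := exists_abs_charlier_le (b + c) ℓ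
  have hpa := poissonPMF_nonneg ha
  have hpb := poissonPMF_nonneg hb
  have hpc := poissonPMF_nonneg hc
  have hsum : Summable F := by
    -- The two factors `2 ^ (u + j)` and `2 ^ (v + j)` contribute `4 ^ j` in total.
    have hab := (summable_poissonPMF_mul_pow a 2).mul_of_nonneg (summable_poissonPMF_mul_pow b 2)
      (fun x => mul_nonneg (hpa x) (by positivity)) (fun x => mul_nonneg (hpb x) (by positivity))
    have habc := (summable_poissonPMF_mul_pow c 4).mul_of_nonneg hab
      (fun x => mul_nonneg (hpc x) (by positivity))
      (fun x => mul_nonneg (mul_nonneg (hpa _) (by positivity))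
        (mul_nonneg (hpb _) (by positivity)))
    refine Summable.of_norm_bounded (habc.mul_left (C * D)) ?_
    rintro ⟨j, u, v⟩
    simp only [hF, Real.norm_eq_abs, abs_mul, abs_of_nonneg (hpa _), abs_of_nonneg (hpb _),
      abs_of_nonneg (hpc _)]
    calc _ ≤ poissonPMF c j * ((poissonPMF a u * (C * 2 ^ (u + j))) *
          (poissonPMF b v * (D * 2 ^ (v + j)))) := by
          refine mul_le_mul_of_nonneg_left ?_ (hpc j)
          refine mul_le_mul (mul_le_mul_of_nonneg_left (hCk _) (hpa u))
            (mul_le_mul_of_nonneg_left (hDl _) (hpb v))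
            (mul_nonneg (hpb v) (abs_nonneg _)) (mul_nonneg (hpa u) (by positivity))
      _ = _ := by
          rw [show (4 : ℝ) = 2 * 2 by norm_num, mul_pow, pow_add, pow_add]
          ring
  have hfib : ∀ j, HasSum (fun w : ℕ × ℕ => F (j, w))
      (poissonPMF c j * (charlier c k j * charlier c ℓ j)) := by
    intro j
    -- The weight can vanish (for `c = 0` and `j > 0`), and then says nothing about the fibre.
    by_cases hj : poissonPMF c j = 0
    · simp [hF, hj]
    · have hs : Summable fun w : ℕ × ℕ => poissonPMF a w.1 * charlier (a + c) k (w.1 + j) *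
          (poissonPMF b w.2 * charlier (b + c) ℓ (w.2 + j)) :=
        (summable_mul_left_iff hj).1 (hsum.prod_factor j)
      have hm := (hasSum_charlier_shift a c k j).mul (hasSum_charlier_shift b c ℓ j) hs
      exact hm.mul_left (poissonPMF c j)
  have h := hsum.hasSum.prod_fiberwise hfib
  rw [← h.unique (hasSum_charlier_mul c k ℓ)]
  exact hsum.hasSum

/-- bivariate orthogonality property of Charlier polynomials. -/
theorem bivariate_charlier_orthogonality (μ₁ μ₂ μ₃ : ℝ) (h₁ : 0 < μ₁) (h₂ : 0 < μ₂)
    (h₃ : 0 ≤ μ₃) (h₃' : μ₃ < min μ₁ μ₂) (k ℓ : ℕ) :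
    Summable (fun q : ℕ × ℕ =>
      poissonPMF₂ μ₁ μ₂ μ₃ q.1 q.2 * charlier μ₁ k q.1 * charlier μ₂ ℓ q.2) ∧
    ∑' q : ℕ × ℕ, poissonPMF₂ μ₁ μ₂ μ₃ q.1 q.2 * charlier μ₁ k q.1 * charlier μ₂ ℓ q.2
      = if k = ℓ then (k.factorial : ℝ) * μ₃ ^ k else 0 := by
  suffices h : HasSum (fun q : ℕ × ℕ =>
      poissonPMF₂ μ₁ μ₂ μ₃ q.1 q.2 * charlier μ₁ k q.1 * charlier μ₂ ℓ q.2)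
      (if k = ℓ then (k.factorial : ℝ) * μ₃ ^ k else 0) from ⟨h.summable, h.tsum_eq⟩
  obtain ⟨h31, h32⟩ := lt_min_iff.1 h₃'
  have ht := hasSum_triple (sub_nonneg.2 h31.le) (sub_nonneg.2 h32.le) h₃ k ℓ
  simp only [sub_add_cancel] at ht
  -- `e` sends the components `(j, u, v)` to `((u + j, v + j), j)`; `G` is the summand on the target,
  -- extended by zero off the range of `e`, which is the region `j ≤ min x y`.
  set G : (ℕ × ℕ) × ℕ → ℝ := fun t => if t.2 ≤ min t.1.1 t.1.2 then
    poissonPMF (μ₁ - μ₃) (t.1.1 - t.2) * poissonPMF (μ₂ - μ₃) (t.1.2 - t.2) * poissonPMF μ₃ t.2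
      * charlier μ₁ k t.1.1 * charlier μ₂ ℓ t.1.2 else 0 with hG
  let e : ℕ × ℕ × ℕ → (ℕ × ℕ) × ℕ := fun t => ((t.2.1 + t.1, t.2.2 + t.1), t.1)
  have he : Function.Injective e := by
    rintro ⟨j, u, v⟩ ⟨j', u', v'⟩ h
    simp only [e, Prod.mk.injEq] at h ⊢
    omega
  have h0 : ∀ t ∉ Set.range e, G t = 0 := by
    rintro ⟨⟨x, y⟩, j⟩ h
    refine if_neg fun hj => h ⟨(j, x - j, y - j), ?_⟩
    simp only [le_min_iff] at hj
    simp [e, Nat.sub_add_cancel hj.1, Nat.sub_add_cancel hj.2]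
  have hGs : HasSum G (if k = ℓ then (k.factorial : ℝ) * μ₃ ^ k else 0) := by
    refine (he.hasSum_iff h0).1 (ht.congr_fun fun t => ?_)
    simp [hG, e]
    ring
  refine hGs.prod_fiberwise fun q => ?_
  have hs := hasSum_sum_of_ne_finset_zero (f := fun j => G (q, j))
    (L := SummationFilter.unconditional ℕ)
    (s := Finset.range (min q.1 q.2 + 1)) (fun j hj => if_neg (by
      simpa [Nat.lt_succ_iff] using hj))
  have hq : poissonPMF₂ μ₁ μ₂ μ₃ q.1 q.2 * charlier μ₁ k q.1 * charlier μ₂ ℓ q.2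
      = ∑ j ∈ Finset.range (min q.1 q.2 + 1), G (q, j) := by
    rw [poissonPMF₂, Finset.sum_mul, Finset.sum_mul]
    refine Finset.sum_congr rfl fun j hj => ?_
    exact (if_pos (Nat.lt_succ_iff.1 (Finset.mem_range.1 hj))).symm
  rw [hq]
  exact hs
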